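/- Let n ≥ 2, fix j ∈ Fin n, and let c : Fin n → ℤ. Then the automorphism ∏_{i ≠ j} α_{i,j}^{c(i)} of F_n (the product over all i ∈ Fin n with i ≠ j; the factors pairwise commute, so the order is irrelevant) is an inner automorphism of F_n if and only if all the integers c(i) for i ≠ j are equal to each other. -/

import Mathlib

/-- The Whitehead generator `α_{I,j} ∈ Aut(F_n)`: the automorphism of the free group
`FreeGroup (Fin n)` determined on the basis by `x i ↦ x j⁻¹ * x i * x j` for `i ∈ I`
and `x i ↦ x i` for `i ∉ I`. -/
def whitehead (n : ℕ) (I : Finset (Fin n)) (j : Fin n) : MulAut (FreeGroup (Fin n)) :=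
  MonoidHom.toMulEquiv
    (FreeGroup.lift (fun i : Fin n =>
      if i ∈ I then (FreeGroup.of j)⁻¹ * FreeGroup.of i * FreeGroup.of j
      else FreeGroup.of i))
    (FreeGroup.lift (fun i : Fin n =>
      if i ∈ I then FreeGroup.of j * FreeGroup.of i * (FreeGroup.of j)⁻¹
      else FreeGroup.of i))
    (by
      apply FreeGroup.ext_hom
      intro i
      by_cases hi : i ∈ I <;> by_cases hj : j ∈ I <;>
        simp [hi, hj, FreeGroup.lift_apply_of] <;> group)
    (by
      apply FreeGroup.ext_hom
      intro i
      by_cases hi : i ∈ I <;> by_cases hj : j ∈ I <;>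
        simp [hi, hj, FreeGroup.lift_apply_of] <;> group)

/-!
Write `P` for the product. It sends each `x_k` to its conjugate by `x_j ^ (-c k)`; this includes
`k = j`, where the conjugation is trivial. If all `c k` with `k ≠ j` equal `m`, then `P` is
conjugation by `x_j ^ (-m)`. Conversely, if `P` is conjugation by `g`, then `x_j ^ c k * g` commutes
with `x_k` for every `k ≠ j`. An element commuting with `x_k` has exponent sum zero in every other
generator, so the exponent sum of `x_j` in `g` is `-c k`, whatever `k ≠ j` is.

The fact about commuting elements holds because any two homomorphisms from a free group to the
additive group of a ring are the off-diagonal coordinates of a homomorphism to the Heisenberg group,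
and there two elements `(x, y, z)` and `(x', y', z')` commute only if `x * y' = x' * y`.
-/

/-- The Heisenberg group over `R`: the triple `(x, y, z)` stands for the unitriangular matrix
`!![1, x, z; 0, 1, y; 0, 0, 1]`. Commutators in it evaluate the form `x * y' - x' * y`. -/
@[ext]
structure Heisenberg (R : Type*) where
  x : R
  y : R
  z : R

namespace Heisenberg

variable {R : Type*} [Ring R]

instance : Mul (Heisenberg R) where
  mul g h := ⟨g.x + h.x, g.y + h.y, g.z + g.x * h.y + h.z⟩

instance : One (Heisenberg R) where
  one := ⟨0, 0, 0⟩

instance : Inv (Heisenberg R) where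
  inv g := ⟨-g.x, -g.y, -g.z + g.x * g.y⟩

@[simp]
lemma mul_x (g h : Heisenberg R) : (g * h).x = g.x + h.x := rfl

@[simp]
lemma mul_y (g h : Heisenberg R) : (g * h).y = g.y + h.y := rfl

@[simp]
lemma mul_z (g h : Heisenberg R) : (g * h).z = g.z + g.x * h.y + h.z := rfl

@[simp]
lemma one_x : (1 : Heisenberg R).x = 0 := rfl

@[simp]
lemma one_y : (1 : Heisenberg R).y = 0 := rfl

@[simp]
lemma one_z : (1 : Heisenberg R).z = 0 := rfl

@[simp]
lemma inv_x (g : Heisenberg R) : g⁻¹.x = -g.x := rfl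

@[simp]
lemma inv_y (g : Heisenberg R) : g⁻¹.y = -g.y := rfl

@[simp]
lemma inv_z (g : Heisenberg R) : g⁻¹.z = -g.z + g.x * g.y := rfl

instance : Group (Heisenberg R) :=
  Group.ofLeftAxioms
    (fun _ _ _ => by ext <;> simp only [mul_x, mul_y, mul_z, mul_add, add_mul] <;> abel)
    (fun _ => by ext <;> simp)
    (fun _ => by ext <;> simp)

/-- The projection of the Heisenberg group onto its first coordinate. -/
def xHom : Heisenberg R →* Multiplicative R where
  toFun g := Multiplicative.ofAdd g.x
  map_one' := rfl
  map_mul' _ _ := rfl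

/-- The projection of the Heisenberg group onto its second coordinate. -/
def yHom : Heisenberg R →* Multiplicative R where
  toFun g := Multiplicative.ofAdd g.y
  map_one' := rfl
  map_mul' _ _ := rfl

lemma x_mul_y_eq_of_commute {g h : Heisenberg R} (hgh : Commute g h) :
    g.x * h.y = h.x * g.y := by
  have hz : g.z + g.x * h.y + h.z = h.z + h.x * g.y + g.z := congrArg z hgh.eq
  rw [← sub_eq_zero] at hz ⊢
  rw [← hz]
  abel

end Heisenberg

section Conj

variable {G : Type*} [Group G]

lemma conj_apply_eq_conj_apply_iff_commute {g h x : G} :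
    MulAut.conj g x = MulAut.conj h x ↔ Commute (h⁻¹ * g) x := by
  rw [commute_iff_eq, mul_assoc, inv_mul_eq_iff_eq_mul, MulAut.conj_apply, MulAut.conj_apply,
    mul_inv_eq_iff_eq_mul]
  simp only [mul_assoc]

lemma conj_zpow_apply_self (g : G) (m : ℤ) : MulAut.conj (g ^ m) g = g := by
  rw [MulAut.conj_apply]
  group

end Conj

section FreeGroup

open Multiplicative

variable {α : Type*}

lemma toAdd_mul_toAdd_eq_of_commute {R : Type*} [Ring R] (a b : FreeGroup α →* Multiplicative R)
    {u v : FreeGroup α} (huv : Commute u v) :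
    (a u).toAdd * (b v).toAdd = (a v).toAdd * (b u).toAdd := by
  let φ : FreeGroup α →* Heisenberg R :=
    FreeGroup.lift fun k => ⟨(a (FreeGroup.of k)).toAdd, (b (FreeGroup.of k)).toAdd, 0⟩
  have hx : Heisenberg.xHom.comp φ = a := by
    ext k
    simp [φ, Heisenberg.xHom]
  have hy : Heisenberg.yHom.comp φ = b := by
    ext k
    simp [φ, Heisenberg.yHom]
  rw [← hx, ← hy]
  exact Heisenberg.x_mul_y_eq_of_commute (huv.map φ)

lemma mulAut_freeGroup_ext {φ ψ : MulAut (FreeGroup α)}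
    (h : ∀ k, φ (FreeGroup.of k) = ψ (FreeGroup.of k)) : φ = ψ :=
  MulEquiv.toMonoidHom_injective (FreeGroup.ext_hom _ _ h)

variable [DecidableEq α]

/-- The exponent sum of the generator `i` in a word, written multiplicatively. -/
def exponentSum (i : α) : FreeGroup α →* Multiplicative ℤ :=
  FreeGroup.lift (Pi.mulSingle i (ofAdd 1))

@[simp]
lemma exponentSum_of_self (i : α) : exponentSum i (FreeGroup.of i) = ofAdd 1 := by
  simp [exponentSum]

lemma exponentSum_of_of_ne {i k : α} (h : k ≠ i) : exponentSum i (FreeGroup.of k) = 1 := by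
  simp [exponentSum, h]

lemma exponentSum_of_zpow_self (i : α) (m : ℤ) :
    exponentSum i (FreeGroup.of i ^ m) = ofAdd m := by
  rw [map_zpow, exponentSum_of_self, ← ofAdd_zsmul, smul_eq_mul, mul_one]

lemma exponentSum_eq_one_of_commute_of {i j : α} (hij : i ≠ j) {w : FreeGroup α}
    (hw : Commute (FreeGroup.of i) w) : exponentSum j w = 1 := by
  have h := toAdd_mul_toAdd_eq_of_commute (exponentSum i) (exponentSum j) hw
  simpa [exponentSum_of_of_ne hij] using h

lemma exponentSum_eq_of_conj_of_eq {i j : α} (hij : i ≠ j) {g h : FreeGroup α}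
    (hgh : MulAut.conj g (FreeGroup.of i) = MulAut.conj h (FreeGroup.of i)) :
    exponentSum j g = exponentSum j h := by
  have hcomm := (conj_apply_eq_conj_apply_iff_commute.mp hgh).symm
  have h_one := exponentSum_eq_one_of_commute_of hij hcomm
  rwa [map_mul, map_inv, inv_mul_eq_one, eq_comm] at h_one

end FreeGroup

section Whitehead

variable {n : ℕ}

lemma whitehead_apply_of (I : Finset (Fin n)) (j k : Fin n) :
    whitehead n I j (FreeGroup.of k) =
      if k ∈ I then (FreeGroup.of j)⁻¹ * FreeGroup.of k * FreeGroup.of j else FreeGroup.of k := by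
  simp [whitehead]

lemma whitehead_inv_apply_of (I : Finset (Fin n)) (j k : Fin n) :
    (whitehead n I j)⁻¹ (FreeGroup.of k) =
      if k ∈ I then FreeGroup.of j * FreeGroup.of k * (FreeGroup.of j)⁻¹ else FreeGroup.of k :=
  FreeGroup.lift_apply_of

lemma whitehead_zpow_apply_of {I : Finset (Fin n)} {j : Fin n} (hj : j ∉ I) (m : ℤ) (k : Fin n) :
    (whitehead n I j ^ m) (FreeGroup.of k) =
      if k ∈ I then MulAut.conj (FreeGroup.of j ^ (-m)) (FreeGroup.of k) else FreeGroup.of k := by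
  induction m generalizing k with
  | zero => simp
  | succ p ih =>
    rw [zpow_add_one, MulAut.mul_apply, whitehead_apply_of]
    split_ifs with hk
    · simp only [map_mul, map_inv, ih, hj, hk, if_true, if_false, MulAut.conj_apply]
      group
    · rw [ih, if_neg hk]
  | pred p ih =>
    rw [zpow_sub_one, MulAut.mul_apply, whitehead_inv_apply_of]
    split_ifs with hk
    · simp only [map_mul, map_inv, ih, hj, hk, if_true, if_false, MulAut.conj_apply]
      group
    · rw [ih, if_neg hk]

lemma list_prod_whitehead_zpow_apply_of {j : Fin n} (c : Fin n → ℤ) {l : List (Fin n)}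
    (hl : l.Nodup) (hj : j ∉ l) (k : Fin n) :
    (l.map fun i => whitehead n {i} j ^ c i).prod (FreeGroup.of k) =
      if k ∈ l then MulAut.conj (FreeGroup.of j ^ (-c k)) (FreeGroup.of k)
      else FreeGroup.of k := by
  induction l with
  | nil => simp
  | cons a l ih =>
    obtain ⟨hal, hl⟩ := List.nodup_cons.mp hl
    obtain ⟨hja, hjl⟩ := not_or.mp (List.mem_cons.not.mp hj)
    have whitehead_zpow_apply := whitehead_zpow_apply_of (Finset.notMem_singleton.mpr hja) (c a)
    have whitehead_fixes (i : Fin n) (hi : i ≠ a) :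
        (whitehead n {a} j ^ c a) (FreeGroup.of i) = FreeGroup.of i := by
      rw [whitehead_zpow_apply, if_neg (Finset.notMem_singleton.mpr hi)]
    rw [List.map_cons, List.prod_cons, MulAut.mul_apply, ih hl hjl]
    by_cases hka : k = a
    · subst hka
      simp [hal, whitehead_zpow_apply]
    · simp only [List.mem_cons, hka, false_or]
      split_ifs
      · simp only [MulAut.conj_apply, map_mul, map_inv, map_zpow (whitehead n {a} j ^ c a),
          whitehead_fixes k hka, whitehead_fixes j hja]
      · exact whitehead_fixes k hka

lemma list_prod_whitehead_zpow_filter_ne_apply_of (j : Fin n) (c : Fin n → ℤ) (k : Fin n) :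
    (((List.finRange n).filter (fun i => i ≠ j)).map fun i => whitehead n {i} j ^ c i).prod
      (FreeGroup.of k) = MulAut.conj (FreeGroup.of j ^ (-c k)) (FreeGroup.of k) := by
  rw [list_prod_whitehead_zpow_apply_of c ((List.nodup_finRange n).filter _) (by simp)]
  obtain rfl | hk := eq_or_ne k j
  · rw [conj_zpow_apply_self, ite_self]
  · simp [hk]

end Whitehead

/-- For `n ≥ 2`, `j : Fin n` and `c : Fin n → ℤ`, the automorphism
`∏_{i ≠ j} α_{i,j} ^ (c i)` of `F_n` (product over all `i ≠ j`; the factors pairwise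
commute so the order is irrelevant) is inner if and only if all the integers `c i`
for `i ≠ j` are equal to each other. -/
theorem prod_whitehead_inner_iff (n : ℕ) (hn : 2 ≤ n) (j : Fin n) (c : Fin n → ℤ) :
    ((((List.finRange n).filter (fun i => i ≠ j)).map
        (fun i => whitehead n {i} j ^ c i)).prod
      ∈ Set.range (MulAut.conj : FreeGroup (Fin n) →* MulAut (FreeGroup (Fin n))))
      ↔ ∀ i i' : Fin n, i ≠ j → i' ≠ j → c i = c i' := by
  constructor
  · rintro ⟨g, hg⟩ i i' hi hi'
    have exponentSum_conjugator (k : Fin n) (hk : k ≠ j) :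
        exponentSum j g = Multiplicative.ofAdd (-c k) := by
      rw [← exponentSum_of_zpow_self j]
      refine exponentSum_eq_of_conj_of_eq hk ?_
      rw [hg, list_prod_whitehead_zpow_filter_ne_apply_of]
    have h := (exponentSum_conjugator i hi).symm.trans (exponentSum_conjugator i' hi')
    exact neg_injective (Multiplicative.ofAdd.injective h)
  · intro hc
    have : Nontrivial (Fin n) := Fin.nontrivial_iff_two_le.mpr hn
    obtain ⟨i, hi⟩ := exists_ne j
    refine ⟨FreeGroup.of j ^ (-c i), mulAut_freeGroup_ext fun k => ?_⟩
    rw [list_prod_whitehead_zpow_filter_ne_apply_of]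
    obtain rfl | hk := eq_or_ne k j
    · rw [conj_zpow_apply_self, conj_zpow_apply_self]
    · rw [hc i k hi hk]
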